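/- Let p = 2, let (G,N) be a pair of finite 2-groups, let σ : N* → G be a relative central extension of (G,N), and let K be a G-invariant subgroup of N*. Then [K,G] ≤ 𝕌₂(K) if and only if [K,G] ≤ 𝕌₂(K)·[K, _2 G]. (Lemma 3.7(ii) of the paper: the right-hand condition is the unfolded form of the condition [K/[K, _2 G], G] ≤ 𝕌₂(K/[K, _2 G]) in the quotient.) -/

import Mathlib

/-!
The condition `[K, G] ⊆ 𝕌₂(K) · [K, _2 G]` says that modulo the `G`-invariant normal subgroup
`𝕌₂(K)` the image of `[K, G]` coincides with its own commutator with `G`. Forming commutators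
with `G` is compatible with this quotient (`commSub_le_sup`), so iterating gives
`[K, G] ≤ 𝕌₂(K) ⊔ [K, _n G]` for every `n ≥ 1`. Since `G` is a finite `2`-group it is nilpotent:
the `c`-th term of its lower central series is trivial for some `c`, and `σ` kills `[K, _c G]`
(`map_iterComm_le`). As `G` acts trivially on `ker σ`, it follows that `[K, _(c+1) G] = 1`
(`iterComm_succ_eq_bot`).
-/

/-- The iterated commutator subgroup `[N, _k G]`. -/
def iterCommG {G : Type*} [Group G] (N : Subgroup G) : ℕ → Subgroup G
  | 0 => N
  | k + 1 => ⁅iterCommG N k, (⊤ : Subgroup G)⁆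

/-- `𝕌_i(H)`: the subgroup generated by all `p^i`-th powers of elements of `H`. -/
def pPow {G : Type*} [Group G] (p i : ℕ) (H : Subgroup G) : Subgroup G :=
  Subgroup.closure {x | ∃ h ∈ H, x = h ^ p ^ i}

/-- A relative central extension of the pair `(G, N)`. -/
structure RelCentralExt {M G : Type*} [Group M] [Group G] (σ : M →* G) (N : Subgroup G) where
  /-- the action of `G` on `M`, written `m ↦ m^g` in the paper -/
  act : M → G → M
  act_mul : ∀ m n g, act (m * n) g = act m g * act n g
  act_one : ∀ m, act m 1 = m
  act_act : ∀ m g h, act (act m g) h = act m (g * h)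
  range_eq : σ.range = N
  sigma_act : ∀ m g, σ (act m g) = g⁻¹ * σ m * g
  act_sigma : ∀ m m₁, act m (σ m₁) = m₁⁻¹ * m * m₁
  ker_act : ∀ a ∈ σ.ker, ∀ g : G, act a g = a

namespace RelCentralExt

variable {M G : Type*} [Group M] [Group G] {σ : M →* G} {N : Subgroup G}

/-- The `G`-commutator `[m, g] = m⁻¹ · m^g`. -/
def cmt (E : RelCentralExt σ N) (m : M) (g : G) : M := m⁻¹ * E.act m g

/-- The subgroup `[M', G]` generated by all `G`-commutators `[m, g]`, `m ∈ M'`, `g ∈ G`. -/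
def commSub (E : RelCentralExt σ N) (M' : Subgroup M) : Subgroup M :=
  Subgroup.closure {x | ∃ m ∈ M', ∃ g : G, x = E.cmt m g}

/-- The iterated subgroup `[M', _n G]`. -/
def iterComm (E : RelCentralExt σ N) (M' : Subgroup M) : ℕ → Subgroup M
  | 0 => M'
  | n + 1 => E.commSub (E.iterComm M' n)

end RelCentralExt

open Pointwise

namespace RelCentralExt

variable {M G : Type*} [Group M] [Group G] {σ : M →* G} {N : Subgroup G}

/-- The action of a fixed `g : G` on `M` as an endomorphism. -/
def actHom (E : RelCentralExt σ N) (g : G) : M →* M :=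
  MonoidHom.mk' (fun m => E.act m g) fun m n => E.act_mul m n g

/-- `𝕌_i(K)` inherits `G`-invariance from `K`. -/
lemma act_mem_pPow (E : RelCentralExt σ N) (p i : ℕ) {K : Subgroup M}
    (hK : ∀ m ∈ K, ∀ g : G, E.act m g ∈ K) :
    ∀ u ∈ pPow p i K, ∀ g : G, E.act u g ∈ pPow p i K := by
  intro u hu g
  suffices h : pPow p i K ≤ (pPow p i K).comap (E.actHom g) from h hu
  refine (Subgroup.closure_le _).2 ?_
  rintro _ ⟨h, hh, rfl⟩
  refine Subgroup.subset_closure ⟨E.act h g, hK h hh g, ?_⟩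
  exact map_pow (E.actHom g) h _

/-- `M` acts on itself by conjugation through `σ`, so `G`-invariant subgroups are normal. -/
lemma normal_of_act_mem (E : RelCentralExt σ N) {U : Subgroup M}
    (hU : ∀ u ∈ U, ∀ g : G, E.act u g ∈ U) : U.Normal := by
  refine ⟨fun u hu m => ?_⟩
  have h := hU u hu (σ m⁻¹)
  rwa [E.act_sigma, inv_inv] at h

lemma commSub_mono (E : RelCentralExt σ N) {A B : Subgroup M} (h : A ≤ B) :
    E.commSub A ≤ E.commSub B := by
  refine Subgroup.closure_mono ?_
  rintro _ ⟨m, hm, g, rfl⟩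
  exact ⟨m, h hm, g, rfl⟩

/-- Forming `[-, G]` is compatible with passing to the quotient by a `G`-invariant subgroup. -/
lemma commSub_le_sup (E : RelCentralExt σ N) {U A B : Subgroup M}
    (hU : ∀ u ∈ U, ∀ g : G, E.act u g ∈ U) (h : A ≤ U ⊔ B) :
    E.commSub A ≤ U ⊔ E.commSub B := by
  have hn : U.Normal := E.normal_of_act_mem hU
  refine (Subgroup.closure_le _).2 ?_
  rintro _ ⟨m, hm, g, rfl⟩
  obtain ⟨u, hu, b, hb, rfl⟩ := Subgroup.mem_sup_of_normal_left.1 (h hm)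
  have key : E.cmt (u * b) g = (b⁻¹ * (u⁻¹ * E.act u g) * b⁻¹⁻¹) * E.cmt b g := by
    simp only [cmt, E.act_mul]
    group
  rw [key]
  exact Subgroup.mul_mem_sup
    (hn.conj_mem _ (U.mul_mem (U.inv_mem hu) (hU u hu g)) _)
    (Subgroup.subset_closure ⟨b, hb, g, rfl⟩)

open scoped commutatorElement in
lemma map_iterComm_le (E : RelCentralExt σ N) (K : Subgroup M) (n : ℕ) :
    (E.iterComm K n).map σ ≤ Subgroup.lowerCentralSeries (⊤ : Subgroup G) n := by
  induction n with
  | zero => simp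
  | succ n ih =>
    rw [Subgroup.map_le_iff_le_comap]
    refine (Subgroup.closure_le _).2 ?_
    rintro _ ⟨m, hm, g, rfl⟩
    have hm' := ih (Subgroup.mem_map_of_mem σ hm)
    have key : σ (E.cmt m g) = ⁅(σ m)⁻¹, g⁻¹⁆ := by
      simp [cmt, E.sigma_act, commutatorElement_def, mul_assoc]
    change σ (E.cmt m g) ∈ Subgroup.lowerCentralSeries (⊤ : Subgroup G) (n + 1)
    rw [key]
    exact Subgroup.commutator_mem_commutator (inv_mem hm') (Subgroup.mem_top _)

/-- `G` acts trivially on `ker σ`, so the iterated commutators vanish one step after `σ`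
kills them. -/
lemma iterComm_succ_eq_bot (E : RelCentralExt σ N) (K : Subgroup M) {n : ℕ}
    (h : E.iterComm K n ≤ σ.ker) : E.iterComm K (n + 1) = ⊥ := by
  refine (Subgroup.closure_eq_bot_iff).2 ?_
  rintro _ ⟨m, hm, g, rfl⟩
  simp [cmt, E.ker_act m (h hm) g]

end RelCentralExt

/-- Lemma 3.7(ii): let `(G, N)` be a pair of finite `2`-groups, `σ : N* → G` a relative
central extension of `(G, N)`, and `K` a `G`-invariant subgroup of `N*`. Then
`[K, G] ≤ 𝕌₂(K)` iff `[K, G] ⊆ 𝕌₂(K) · [K, _2 G]` (the latter being the unfolded form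
of `[K/[K, _2 G], G] ≤ 𝕌₂(K/[K, _2 G])`). -/
theorem stmt_10 {G : Type*} [Group G] [Finite G]
    (hG : IsPGroup 2 G) (N : Subgroup G) (hN : N.Normal)
    {Nstar : Type*} [Group Nstar] (σ : Nstar →* G) (E : RelCentralExt σ N)
    (K : Subgroup Nstar) (hKinv : ∀ m ∈ K, ∀ g : G, E.act m g ∈ K) :
    E.commSub K ≤ pPow 2 2 K ↔
      (E.commSub K : Set Nstar) ⊆ (pPow 2 2 K : Set Nstar) * (E.iterComm K 2 : Set Nstar) := by
  constructor
  · intro h x hx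
    exact ⟨x, h hx, 1, one_mem _, mul_one x⟩
  · intro h
    set U := pPow 2 2 K with hUdef
    have hU : ∀ u ∈ U, ∀ g : G, E.act u g ∈ U := E.act_mem_pPow 2 2 hKinv
    have hstep : ∀ n, E.iterComm K (n + 1) ≤ U ⊔ E.iterComm K (n + 2) := by
      intro n
      induction n with
      | zero =>
        intro x hx
        obtain ⟨u, hu, d, hd, rfl⟩ := h hx
        exact Subgroup.mul_mem_sup hu hd
      | succ n ih => exact E.commSub_le_sup hU ih
    have hall : ∀ n, E.commSub K ≤ U ⊔ E.iterComm K (n + 1) := by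
      intro n
      induction n with
      | zero => exact le_sup_right
      | succ n ih => exact ih.trans (sup_le le_sup_left (hstep n))
    have : Fact (Nat.Prime 2) := ⟨Nat.prime_two⟩
    have hnil : Group.IsNilpotent G := hG.isNilpotent
    obtain ⟨c, hc⟩ := Subgroup.nilpotent_iff_lowerCentralSeries.1 hnil
    have hker : E.iterComm K c ≤ σ.ker := by
      intro x hx
      have := E.map_iterComm_le K c (Subgroup.mem_map_of_mem σ hx)
      rw [hc] at this
      exact this
    have := hall c
    rwa [E.iterComm_succ_eq_bot K hker, sup_bot_eq] at this
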